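/- The path-recording oracle is a partial isometry on injective relation states. Let N ≥ 1 and 0 ≤ t < N. For x ∈ [N] and an injective tuple p = ((x_1,y_1),…,(x_t,y_t)) ∈ ([N]×[N])^t (i.e., y_1,…,y_t pairwise distinct), define W(x,p) := (1/√(N−t)) · Σ_{y∈[N], y∉{y_1,…,y_t}} e_y ⊗ |p⌢(x,y)⟩_rel ∈ ℂ^N ⊗ (ℂ^N⊗ℂ^N)^{⊗(t+1)}, where p⌢(x,y) is p with (x,y) appended and |q⟩_rel := (1/√((t+1)!)) Σ_{π∈S_{t+1}} ⊗_{i=1}^{t+1} (e_{x_{π^{-1}(i)}} ⊗ e_{y_{π^{-1}(i)}}) for a tuple q = ((x_i,y_i))_{i=1}^{t+1} with pairwise distinct pairs. Then for all x, x' ∈ [N] and injective tuples p, p' of length t: ⟨W(x',p'), W(x,p)⟩ = 1 if x = x' and p, p' are equal as multisets of pairs, and ⟨W(x',p'), W(x,p)⟩ = 0 otherwise. -/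

import Mathlib

/-!
For injective tuples, `|q⟩_rel` is a normalized symmetrization: it depends only on the multiset of
entries of `q`, and two relation states are orthogonal unless the multisets agree, because every
basis tuple in the support of `|q⟩_rel` is a reordering of `q`
(`sum_relStateVec_mul`).

The inner product of `W(x',p')` and `W(x,p)` is a sum over the output register `z`. If `z` occurs
as a `y`-coordinate of neither `p` nor `p'`, then `(x,z)` is the only pair of `p⌢(x,z)` with second
coordinate `z`, and likewise for `p'⌢(x',z)`. Hence the two extended multisets agree exactly when
`x = x'` and `p`, `p'` agree as multisets (`ofFn_snoc_eq_iff`). In that case each of the `N - t`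
admissible values of `z` contributes `1 / (N - t)`; otherwise every contribution vanishes.
-/

open Finset

/-- The normalized relation state `|q⟩_rel` of a tuple `q` with pairwise distinct pairs,
written entrywise: `|q⟩_rel = (1/√(s!)) Σ_{π ∈ S_s} ⊗_i e_{q(π⁻¹(i))}`. -/
noncomputable def relStateVec (N s : ℕ) (q : Fin s → Fin N × Fin N) :
    (Fin s → Fin N × Fin N) → ℂ :=
  fun r => (Real.sqrt (s.factorial) : ℂ)⁻¹ *
    ∑ π : Equiv.Perm (Fin s), if (fun i => q (π⁻¹ i)) = r then 1 else 0

/-- The image `W(x,p) = (1/√(N−t)) Σ_{y ∉ Im p} e_y ⊗ |p⌢(x,y)⟩_rel` of the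
path-recording oracle on `e_x ⊗ |p⟩_rel`, written entrywise. -/
noncomputable def pathRecVec (N t : ℕ) (x : Fin N) (p : Fin t → Fin N × Fin N) :
    Fin N × (Fin (t + 1) → Fin N × Fin N) → ℂ :=
  fun zr => (Real.sqrt (N - t) : ℂ)⁻¹ *
    (if ∃ i, (p i).2 = zr.1 then 0 else relStateVec N (t + 1) (Fin.snoc p (x, zr.1)) zr.2)

theorem coe_ofFn_snoc {α : Type*} {t : ℕ} (p : Fin t → α) (a : α) :
    (List.ofFn (Fin.snoc p a : Fin (t + 1) → α) : Multiset α)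
      = a ::ₘ (List.ofFn p : Multiset α) := by
  rw [List.ofFn_succ']
  simp [List.concat_eq_append]

/-- For injective tuples, equality of the multisets of entries is realized by a permutation of the
indices. -/
theorem exists_perm_of_ofFn_eq {α : Type*} {s : ℕ} {q q' : Fin s → α}
    (hq' : Function.Injective q')
    (h : (List.ofFn q : Multiset α) = (List.ofFn q' : Multiset α)) :
    ∃ σ : Equiv.Perm (Fin s), q' = q ∘ σ := by
  have hmem : ∀ i, ∃ j, q j = q' i := by
    intro i
    have : q' i ∈ List.ofFn q := by
      rw [(Multiset.coe_eq_coe.mp h).mem_iff]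
      simp
    simpa using this
  choose f hf using hmem
  have hinj : Function.Injective f := fun i j hij => hq' (by rw [← hf, ← hf, hij])
  exact ⟨Equiv.ofBijective f (Finite.injective_iff_bijective.mp hinj),
    funext fun i => (hf i).symm⟩

theorem relStateVec_comp_perm (N s : ℕ) (q : Fin s → Fin N × Fin N)
    (σ : Equiv.Perm (Fin s)) : relStateVec N s (q ∘ σ) = relStateVec N s q := by
  funext r
  unfold relStateVec
  congr 1
  refine Fintype.sum_equiv (Equiv.mulRight σ⁻¹) _ _ fun π => ?_
  simp [mul_inv_rev]

theorem conj_relStateVec (N s : ℕ) (q r : Fin s → Fin N × Fin N) :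
    (starRingEnd ℂ) (relStateVec N s q r) = relStateVec N s q r := by
  unfold relStateVec
  simp

/-- The relation state of an injective tuple is a unit vector: distinct permutations of the tuple
give distinct basis vectors. -/
theorem sum_relStateVec_sq (N s : ℕ) (q : Fin s → Fin N × Fin N) (hq : Function.Injective q) :
    ∑ r, relStateVec N s q r * relStateVec N s q r = 1 := by
  have hperm : ∀ π ρ : Equiv.Perm (Fin s),
      ((fun i => q (ρ⁻¹ i)) = fun i => q (π⁻¹ i)) ↔ ρ = π := by
    intro π ρ
    constructor
    · intro h
      have : ρ⁻¹ = π⁻¹ := Equiv.ext fun i => hq (congrFun h i)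
      exact inv_injective this
    · rintro rfl
      rfl
  have hsq : ((Real.sqrt (s.factorial) : ℝ) : ℂ)⁻¹ * ((Real.sqrt (s.factorial) : ℝ) : ℂ)⁻¹
      = ((s.factorial : ℕ) : ℂ)⁻¹ := by
    rw [← mul_inv, ← Complex.ofReal_mul, Real.mul_self_sqrt (by positivity)]
    simp
  have hcount : ∑ r : Fin s → Fin N × Fin N,
      (∑ π : Equiv.Perm (Fin s), if (fun i => q (π⁻¹ i)) = r then (1 : ℂ) else 0) *
      (∑ π : Equiv.Perm (Fin s), if (fun i => q (π⁻¹ i)) = r then (1 : ℂ) else 0)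
      = (s.factorial : ℂ) := by
    simp_rw [Finset.sum_mul, ite_mul, one_mul, zero_mul]
    rw [Finset.sum_comm]
    simp_rw [Finset.sum_ite_eq, Finset.mem_univ, if_true, hperm, Finset.sum_ite_eq']
    simp [Fintype.card_perm]
  unfold relStateVec
  simp_rw [mul_mul_mul_comm, hsq]
  rw [← Finset.mul_sum, hcount]
  exact inv_mul_cancel₀ (by exact_mod_cast s.factorial_ne_zero)

theorem ofFn_eq_of_relStateVec_ne_zero (N s : ℕ) (q r : Fin s → Fin N × Fin N)
    (h : relStateVec N s q r ≠ 0) :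
    (List.ofFn r : Multiset (Fin N × Fin N)) = (List.ofFn q : Multiset (Fin N × Fin N)) := by
  unfold relStateVec at h
  obtain ⟨π, -, hπ⟩ := Finset.exists_ne_zero_of_sum_ne_zero (right_ne_zero_of_mul h)
  have hr : q ∘ ⇑(π⁻¹) = r := by
    by_contra hne
    exact hπ (if_neg hne)
  rw [← hr]
  exact Multiset.coe_eq_coe.mpr (Equiv.Perm.ofFn_comp_perm _ _)

/-- Relation states of injective tuples are orthonormal, indexed by the multiset of entries. -/
theorem sum_relStateVec_mul (N s : ℕ) (q q' : Fin s → Fin N × Fin N)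
    (hq : Function.Injective q) (hq' : Function.Injective q') :
    ∑ r, relStateVec N s q' r * relStateVec N s q r =
      if (List.ofFn q : Multiset (Fin N × Fin N)) = (List.ofFn q' : Multiset (Fin N × Fin N))
      then 1 else 0 := by
  split_ifs with h
  · obtain ⟨σ, rfl⟩ := exists_perm_of_ofFn_eq hq' h
    simp_rw [relStateVec_comp_perm]
    exact sum_relStateVec_sq N s q hq
  · refine Finset.sum_eq_zero fun r _ => ?_
    by_contra hne
    exact h ((ofFn_eq_of_relStateVec_ne_zero N s q r (right_ne_zero_of_mul hne)).symm.trans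
      (ofFn_eq_of_relStateVec_ne_zero N s q' r (left_ne_zero_of_mul hne)))

theorem snoc_injective_of_fresh {N t : ℕ} {p : Fin t → Fin N × Fin N}
    (hp : Function.Injective fun i => (p i).2) (x z : Fin N) (hz : ¬ ∃ i, (p i).2 = z) :
    Function.Injective (Fin.snoc p (x, z) : Fin (t + 1) → Fin N × Fin N) := by
  refine Fin.snoc_injective_iff.mpr ⟨fun i j h => hp (congrArg Prod.snd h), ?_⟩
  rintro ⟨i, hi⟩
  exact hz ⟨i, by rw [hi]⟩

/-- If `z` is not a `y`-coordinate of `p'`, the appended pair can be recovered from the extended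
multiset. -/
theorem ofFn_snoc_eq_iff {N t : ℕ} {p p' : Fin t → Fin N × Fin N} (x x' z : Fin N)
    (hz' : ¬ ∃ i, (p' i).2 = z) :
    (List.ofFn (Fin.snoc p (x, z) : Fin (t + 1) → Fin N × Fin N) : Multiset (Fin N × Fin N))
        = (List.ofFn (Fin.snoc p' (x', z) : Fin (t + 1) → Fin N × Fin N) :
            Multiset (Fin N × Fin N)) ↔
      x = x' ∧
        (List.ofFn p : Multiset (Fin N × Fin N)) = (List.ofFn p' : Multiset (Fin N × Fin N)) := by
  rw [coe_ofFn_snoc, coe_ofFn_snoc]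
  constructor
  · intro h
    have hx : x = x' := by
      have hm : (x, z) ∈ (x', z) ::ₘ (List.ofFn p' : Multiset (Fin N × Fin N)) := by
        rw [← h]
        exact Multiset.mem_cons_self _ _
      rcases Multiset.mem_cons.mp hm with h1 | h1
      · exact congrArg Prod.fst h1
      · rw [Multiset.mem_coe, List.mem_ofFn] at h1
        obtain ⟨i, hi⟩ := h1
        exact absurd ⟨i, by rw [hi]⟩ hz'
    subst hx
    exact ⟨rfl, (Multiset.cons_inj_right _).mp h⟩
  · rintro ⟨rfl, h⟩
    rw [h]

theorem card_fresh {N t : ℕ} {p : Fin t → Fin N × Fin N}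
    (hp : Function.Injective fun i => (p i).2) :
    (univ.filter fun z : Fin N => ¬ ∃ i, (p i).2 = z).card = N - t := by
  have h : (univ.filter fun z : Fin N => ¬ ∃ i, (p i).2 = z)
      = (univ.image fun i => (p i).2)ᶜ := by
    ext z
    simp
  rw [h, Finset.card_compl, Finset.card_image_of_injective _ hp]
  simp

/-- **The path-recording oracle is a partial isometry on injective relation states.**
For `0 ≤ t < N`, `x, x' ∈ [N]` and injective tuples `p, p'` of length `t`,
`⟨W(x',p'), W(x,p)⟩ = 1` if `x = x'` and `p, p'` agree as multisets of pairs, and `= 0`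
otherwise. -/
theorem path_recording_partial_isometry (N t : ℕ) (hN : 1 ≤ N) (ht : t < N)
    (x x' : Fin N) (p p' : Fin t → Fin N × Fin N)
    (hp : Function.Injective fun i => (p i).2)
    (hp' : Function.Injective fun i => (p' i).2) :
    (∑ zr : Fin N × (Fin (t + 1) → Fin N × Fin N),
        (starRingEnd ℂ) (pathRecVec N t x' p' zr) * pathRecVec N t x p zr)
      = if x = x' ∧
          (List.ofFn p : Multiset (Fin N × Fin N)) = (List.ofFn p' : Multiset (Fin N × Fin N))
        then 1 else 0 := by
  have hpos : (0 : ℝ) < (N : ℝ) - t := sub_pos.mpr (by exact_mod_cast ht)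
  have hsq : ((Real.sqrt ((N : ℝ) - t) : ℝ) : ℂ)⁻¹ * ((Real.sqrt ((N : ℝ) - t) : ℝ) : ℂ)⁻¹
      = ((N : ℂ) - t)⁻¹ := by
    rw [← mul_inv, ← Complex.ofReal_mul, Real.mul_self_sqrt hpos.le]
    simp
  have hne : ((N : ℂ) - t) ≠ 0 := by
    have := hpos.ne'
    exact_mod_cast this
  have hinner : ∀ z : Fin N,
      (∑ r, (starRingEnd ℂ) (pathRecVec N t x' p' (z, r)) * pathRecVec N t x p (z, r))
      = if (¬ ∃ i, (p i).2 = z) ∧ (¬ ∃ i, (p' i).2 = z) ∧ x = x' ∧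
          (List.ofFn p : Multiset (Fin N × Fin N)) = (List.ofFn p' : Multiset (Fin N × Fin N))
        then ((N : ℂ) - t)⁻¹ else 0 := by
    intro z
    unfold pathRecVec
    by_cases hz : ∃ i, (p i).2 = z
    · simp [hz]
    by_cases hz' : ∃ i, (p' i).2 = z
    · simp [hz']
    simp only [if_neg hz, if_neg hz', map_mul, map_inv₀, Complex.conj_ofReal, conj_relStateVec]
    simp_rw [mul_mul_mul_comm, hsq]
    rw [← Finset.mul_sum, sum_relStateVec_mul N (t + 1) _ _ (snoc_injective_of_fresh hp x z hz)
      (snoc_injective_of_fresh hp' x' z hz')]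
    simp only [ofFn_snoc_eq_iff x x' z hz', hz, hz', not_false_eq_true, true_and, mul_ite,
      mul_one, mul_zero]
  rw [Fintype.sum_prod_type]
  simp_rw [hinner]
  by_cases h : x = x' ∧
      (List.ofFn p : Multiset (Fin N × Fin N)) = (List.ofFn p' : Multiset (Fin N × Fin N))
  · have hfresh : ∀ z : Fin N, (∃ i, (p i).2 = z) ↔ ∃ i, (p' i).2 = z := by
      obtain ⟨σ, rfl⟩ := exists_perm_of_ofFn_eq
        (fun i j hij => hp' (congrArg Prod.snd hij)) h.2
      exact fun z => (σ.surjective.exists (p := fun i => (p i).2 = z))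
    rw [if_pos h]
    simp only [h.1, h.2, and_true, hfresh, and_self]
    rw [← Finset.sum_filter, Finset.sum_const, card_fresh hp', nsmul_eq_mul,
      Nat.cast_sub ht.le]
    exact mul_inv_cancel₀ hne
  · rw [if_neg h]
    exact Finset.sum_eq_zero fun z _ => if_neg fun hz => h hz.2.2
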